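/- arXiv:1309.5724 — 6 statements merged into one kernel-verified Lean document; each statement's English description precedes it below -/
import Mathlib

section
/- A finite connected simple graph G is bipartite if and only if G has a cut-partition, i.e., a set of cuts of G that partitions the edge set of G. -/
/-- A cut of a connected simple graph: an inclusion-minimal set of edges whose
removal disconnects the graph. -/
def IsCut {V : Type*} (G : SimpleGraph V) (C : Set (Sym2 V)) : Prop :=
  C ⊆ G.edgeSet ∧ ¬ (G.deleteEdges C).Connected ∧
    ∀ C' : Set (Sym2 V), C' ⊂ C → (G.deleteEdges C').Connected

/-- A cut-partition: a set of cuts partitioning the edge set. -/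
def IsCutPartition {V : Type*} (G : SimpleGraph V) (𝒞 : Set (Set (Sym2 V))) : Prop :=
  (∀ C ∈ 𝒞, IsCut G C) ∧ 𝒞.PairwiseDisjoint id ∧ ⋃₀ 𝒞 = G.edgeSet

/-!
Let `𝒞` be a cut-partition and `r` a fixed vertex. Crossing an edge of `G` changes, for exactly one
`C ∈ 𝒞`, whether `C` separates the current vertex from `r`. So the parity of the number of members
of `𝒞` separating `v` from `r` is a proper 2-colouring; the number is finite because a walk from `r`
to `v` has finitely many edges.

Conversely, let `G` be bipartite. The two ends of an edge lie at different distances from `r`, so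
exactly one open ball around `r` contains the nearer end and not the farther one, which then lies in
a component of the complement of that ball. The edge boundaries of these components therefore
partition the edge set, and each is a cut since both of its sides are connected.
-/

section

variable {V : Type*} {G : SimpleGraph V} {S K : Set V} {C : Set (Sym2 V)}
  {𝒞 : Set (Set (Sym2 V))} {u v r : V}

/-- The edge boundary of `S`: the edges of `G` with exactly one end in `S`. -/
def edgeBoundary (G : SimpleGraph V) (S : Set V) : Set (Sym2 V) :=
  (G.between S Sᶜ).edgeSet

theorem mk_mem_edgeBoundary : s(u, v) ∈ edgeBoundary G S ↔ G.Adj u v ∧ ¬ (u ∈ S ↔ v ∈ S) := by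
  simp only [edgeBoundary, SimpleGraph.mem_edgeSet, SimpleGraph.between_adj, Set.mem_compl_iff]
  tauto

theorem mem_edgeBoundary {e : Sym2 V} :
    e ∈ edgeBoundary G S ↔ ∃ u ∈ S, ∃ v ∉ S, G.Adj u v ∧ e = s(u, v) := by
  constructor
  · induction e with
    | _ u v =>
      rw [mk_mem_edgeBoundary]
      rintro ⟨huv, hS⟩
      by_cases hu : u ∈ S
      · exact ⟨u, hu, v, by tauto, huv, rfl⟩
      · exact ⟨v, by tauto, u, hu, huv.symm, Sym2.eq_swap⟩
  · rintro ⟨u, hu, v, hv, huv, rfl⟩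
    exact mk_mem_edgeBoundary.2 ⟨huv, by tauto⟩

theorem edgeBoundary_subset_edgeSet : edgeBoundary G S ⊆ G.edgeSet :=
  SimpleGraph.edgeSet_mono SimpleGraph.between_le

theorem not_reachable_deleteEdges_edgeBoundary (hu : u ∈ S) (hv : v ∉ S) :
    ¬ (G.deleteEdges (edgeBoundary G S)).Reachable u v := by
  rintro ⟨p⟩
  obtain ⟨d, -, hfst, hsnd⟩ := p.exists_boundary_dart S hu hv
  obtain ⟨hadj, hnotMem⟩ := SimpleGraph.deleteEdges_adj.1 d.adj
  exact hnotMem (mem_edgeBoundary.2 ⟨_, hfst, _, hsnd, hadj, rfl⟩)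

theorem edgeBoundary_compl : edgeBoundary G Sᶜ = edgeBoundary G S := by
  rw [edgeBoundary, compl_compl, SimpleGraph.between_comm, edgeBoundary]

theorem induce_deleteEdges_of_subset_edgeBoundary (h : C ⊆ edgeBoundary G S) :
    (G.deleteEdges C).induce S = G.induce S := by
  ext ⟨u, hu⟩ ⟨v, hv⟩
  have huv : s(u, v) ∉ C := fun huvC => (mk_mem_edgeBoundary.1 (h huvC)).2 (iff_of_true hu hv)
  simp [huv]

theorem isCut_edgeBoundary (hS : (G.induce S).Preconnected) (hSc : (G.induce Sᶜ).Preconnected)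
    (hne : (edgeBoundary G S).Nonempty) : IsCut G (edgeBoundary G S) := by
  refine ⟨edgeBoundary_subset_edgeSet, fun hconn => ?_, fun C' hC' => ?_⟩
  · obtain ⟨e, he⟩ := hne
    obtain ⟨u, hu, v, hv, -⟩ := mem_edgeBoundary.1 he
    exact not_reachable_deleteEdges_edgeBoundary hu hv (hconn.preconnected u v)
  · obtain ⟨e, he, heC'⟩ := Set.exists_of_ssubset hC'
    obtain ⟨u, hu, v, hv, huv, rfl⟩ := mem_edgeBoundary.1 he
    rw [← induce_deleteEdges_of_subset_edgeBoundary hC'.1] at hS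
    rw [← induce_deleteEdges_of_subset_edgeBoundary
      (hC'.1.trans edgeBoundary_compl.superset)] at hSc
    have hunion := SimpleGraph.connected_induce_union hS hSc hu hv
      (SimpleGraph.deleteEdges_adj.2 ⟨huv, heC'⟩)
    rw [Set.union_compl_self] at hunion
    exact (SimpleGraph.induceUnivIso _).connected_iff.1 hunion

theorem IsCut.eq_edgeBoundary (hC : IsCut G C) (r : V) :
    C = edgeBoundary G {v | (G.deleteEdges C).Reachable r v} := by
  obtain ⟨-, hdis, hmin⟩ := hC
  obtain ⟨w, hw⟩ : ∃ w, ¬ (G.deleteEdges C).Reachable r w := by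
    by_contra! h
    exact hdis (SimpleGraph.connected_iff_exists_forall_reachable _ |>.2 ⟨r, h⟩)
  have hsub : edgeBoundary G {v | (G.deleteEdges C).Reachable r v} ⊆ C := by
    intro e he
    obtain ⟨u, hu, v, hv, huv, rfl⟩ := mem_edgeBoundary.1 he
    by_contra huvC
    exact hv (hu.trans (SimpleGraph.deleteEdges_adj.2 ⟨huv, huvC⟩).reachable)
  by_contra hne
  exact not_reachable_deleteEdges_edgeBoundary (u := r) .rfl hw
    ((hmin _ (hsub.ssubset_of_ne (Ne.symm hne))).preconnected r w)

theorem IsCut.mk_mem_iff (hC : IsCut G C) (r : V) (huv : G.Adj u v) :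
    s(u, v) ∈ C ↔ ¬ ((G.deleteEdges C).Reachable r u ↔ (G.deleteEdges C).Reachable r v) := by
  conv_lhs => rw [hC.eq_edgeBoundary r]
  exact mk_mem_edgeBoundary.trans (and_iff_right huv)

/-- The members of `𝒞` that separate `v` from `r`. The parity of their number is the colour of `v`
in the 2-colouring obtained from a cut-partition `𝒞`. -/
def separatingCuts (G : SimpleGraph V) (𝒞 : Set (Set (Sym2 V))) (r v : V) : Set (Set (Sym2 V)) :=
  {C ∈ 𝒞 | ¬ (G.deleteEdges C).Reachable r v}

theorem IsCutPartition.exists_separatingCuts_eq_symmDiff (h : IsCutPartition G 𝒞) (r : V)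
    (huv : G.Adj u v) :
    ∃ C, separatingCuts G 𝒞 r u = symmDiff (separatingCuts G 𝒞 r v) {C} := by
  obtain ⟨hcut, hdisj, hunion⟩ := h
  obtain ⟨C, hC, huvC⟩ : s(u, v) ∈ ⋃₀ 𝒞 := hunion ▸ huv
  have huv_mem_iff : ∀ D ∈ 𝒞, s(u, v) ∈ D ↔ D = C := fun D hD =>
    ⟨fun huvD => hdisj.elim_set hD hC _ huvD huvC, fun hDC => hDC ▸ huvC⟩
  refine ⟨C, Set.ext fun D => ?_⟩
  simp only [separatingCuts, Set.mem_symmDiff, Set.mem_ofPred_eq, Set.mem_singleton_iff]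
  by_cases hD : D ∈ 𝒞
  · have hseparates_iff := (huv_mem_iff D hD).symm.trans ((hcut D hD).mk_mem_iff r huv)
    tauto
  · have hDC : D ≠ C := fun hDC => hD (hDC ▸ hC)
    tauto

theorem IsCutPartition.finite_separatingCuts (h : IsCutPartition G 𝒞) (hv : G.Reachable v r) :
    (separatingCuts G 𝒞 r v).Finite := by
  obtain ⟨p⟩ := hv
  induction p with
  | nil => simp [separatingCuts]
  | @cons _ _ r huv _ ih =>
    obtain ⟨C, hC⟩ := h.exists_separatingCuts_eq_symmDiff r huv
    exact hC ▸ ih.symmDiff (Set.finite_singleton C)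

theorem even_ncard_symmDiff_singleton {α : Type*} {s : Set α} (hs : s.Finite) (a : α) :
    Even (symmDiff s {a}).ncard ↔ ¬ Even s.ncard := by
  by_cases ha : a ∈ s
  · have : symmDiff s {a} = s \ {a} := by
      simp [Set.symmDiff_def, ha]
    rw [this, ← Set.ncard_sdiff_singleton_add_one ha hs, Nat.even_add_one, not_not]
  · have : symmDiff s {a} = insert a s := by
      simp [Set.symmDiff_def, ha]
    rw [this, Set.ncard_insert_of_notMem ha hs, Nat.even_add_one]

theorem IsCutPartition.colorable_two (h : IsCutPartition G 𝒞) (hG : G.Connected) :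
    G.Colorable 2 := by
  obtain ⟨r⟩ := hG.nonempty
  have valid : ∀ {u v : V}, G.Adj u v →
      Even (separatingCuts G 𝒞 r u).ncard ≠ Even (separatingCuts G 𝒞 r v).ncard := by
    intro u v huv heq
    obtain ⟨C, hC⟩ := h.exists_separatingCuts_eq_symmDiff r huv
    rw [hC, even_ncard_symmDiff_singleton (h.finite_separatingCuts (hG.preconnected v r))] at heq
    exact not_iff_self heq.to_iff
  simpa using (SimpleGraph.Coloring.mk _ valid).colorable

theorem induce_ball_connected {n : ℕ∞} (hn : 0 < n) : (G.induce (G.ball r n)).Connected := by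
  classical
  refine SimpleGraph.induce_connected_of_patches r (SimpleGraph.mem_ball_self hn) fun {v} hv => ?_
  obtain ⟨p, hp⟩ := SimpleGraph.exists_walk_of_edist_ne_top (ne_top_of_lt hv)
  refine ⟨{x | x ∈ p.support}, fun x hx => ?_, p.end_mem_support, p.start_mem_support,
    p.connected_induce_support.preconnected _ _⟩
  calc G.edist x r ≤ (p.dropUntil x hx).length := SimpleGraph.edist_le _
    _ ≤ p.length := by exact_mod_cast p.length_dropUntil_le_length hx
    _ = G.edist v r := hp
    _ < n := hv

theorem induce_componentCompl_connected (A : G.ComponentCompl K) :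
    (G.induce (A : Set V)).Connected := by
  let f : A.toSimpleGraph →g G.induce (A : Set V) :=
    { toFun := fun x => ⟨x.1, x.1.2, x.2⟩
      map_rel' := id }
  have hf : Function.Surjective f := fun ⟨v, hv, hvA⟩ => ⟨⟨⟨v, hv⟩, hvA⟩, rfl⟩
  exact A.connected_toSimpleGraph.map f hf

theorem induce_compl_componentCompl_connected (hG : G.Preconnected)
    (hK : (G.induce K).Connected) (A : G.ComponentCompl K) :
    (G.induce (A : Set V)ᶜ).Connected := by
  obtain ⟨r, hr⟩ := hK.nonempty
  have hKA : K ⊆ (A : Set V)ᶜ := A.disjoint_right.subset_compl_right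
  refine SimpleGraph.induce_connected_of_patches r (hKA hr) fun {v} hvA => ?_
  by_cases hv : v ∈ K
  · exact ⟨K, hKA, hr, hv, hK.preconnected _ _⟩
  let B := G.componentComplMk hv
  have hvB : v ∈ B := G.componentComplMk_mem hv
  have hne : B ≠ A := fun hBA => hvA (hBA ▸ hvB : v ∈ A)
  have hBA : (B : Set V) ⊆ (A : Set V)ᶜ :=
    (SimpleGraph.ComponentCompl.pairwise_disjoint hne).subset_compl_right
  obtain ⟨⟨x, y⟩, hx, hy, hxy⟩ := B.exists_adj_boundary_pair hG ⟨r, hr⟩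
  exact ⟨B ∪ K, Set.union_subset hBA hKA, .inr hr, .inl hvB,
    (SimpleGraph.connected_induce_union (induce_componentCompl_connected B).preconnected
      hK.preconnected hx hy hxy).preconnected _ _⟩

theorem isCut_edgeBoundary_componentCompl (hG : G.Preconnected) (hK : (G.induce K).Connected)
    (A : G.ComponentCompl K) : IsCut G (edgeBoundary G A) := by
  obtain ⟨⟨u, v⟩, hu, hv, huv⟩ :=
    A.exists_adj_boundary_pair hG (Set.nonempty_coe_sort.1 hK.nonempty)
  exact isCut_edgeBoundary (induce_componentCompl_connected A).preconnected
    (induce_compl_componentCompl_connected hG hK A).preconnected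
    ⟨s(u, v), mem_edgeBoundary.2 ⟨u, hu, v, A.disjoint_right.notMem_of_mem_left hv, huv, rfl⟩⟩

/-- The edge boundaries of the components of the complements of the nonempty open balls around `r`.
In a connected bipartite graph they form a cut-partition. -/
def ballCuts (G : SimpleGraph V) (r : V) : Set (Set (Sym2 V)) :=
  {C | ∃ n > 0, ∃ A : G.ComponentCompl (G.ball r n), C = edgeBoundary G A}

theorem isCut_of_mem_ballCuts (hG : G.Preconnected) (hC : C ∈ ballCuts G r) : IsCut G C := by
  obtain ⟨n, hn, A, rfl⟩ := hC
  exact isCut_edgeBoundary_componentCompl hG (induce_ball_connected hn) A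

theorem edist_lt_and_edist_eq_of_mem_componentCompl_ball {n : ℕ∞}
    {A : G.ComponentCompl (G.ball r n)} (hu : u ∈ A) (hv : v ∉ A) (huv : G.Adj u v) :
    G.edist v r < n ∧ G.edist u r = n := by
  have hun : u ∉ G.ball r n := A.notMem_of_mem hu
  have hvn : v ∈ G.ball r n := by_contra fun hvn => hv (A.mem_of_adj u v hu hvn huv)
  refine ⟨hvn, le_antisymm ?_ (not_lt.1 hun)⟩
  calc G.edist u r ≤ G.edist u v + G.edist v r := SimpleGraph.edist_triangle
    _ = G.edist v r + 1 := by rw [SimpleGraph.edist_eq_one_iff_adj.2 huv, add_comm]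
    _ ≤ n := Order.add_one_le_of_lt hvn

theorem pairwiseDisjoint_ballCuts : (ballCuts G r).PairwiseDisjoint id := by
  rintro _ ⟨n, -, A, rfl⟩ _ ⟨m, -, B, rfl⟩ hne
  refine Set.disjoint_left.2 fun e heA heB => hne ?_
  obtain ⟨u, hu, v, hv, huv, rfl⟩ := mem_edgeBoundary.1 heA
  obtain ⟨x, hx, y, hy, hxy, heq⟩ := mem_edgeBoundary.1 heB
  obtain ⟨hvn, hun⟩ := edist_lt_and_edist_eq_of_mem_componentCompl_ball hu hv huv
  obtain ⟨hym, hxm⟩ := edist_lt_and_edist_eq_of_mem_componentCompl_ball hx hy hxy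
  obtain ⟨rfl, rfl⟩ | ⟨rfl, rfl⟩ := Sym2.eq_iff.1 heq
  · obtain rfl : n = m := hun.symm.trans hxm
    obtain ⟨-, rfl⟩ := hu
    obtain ⟨-, rfl⟩ := hx
    rfl
  · rw [hun, ← hxm] at hym
    exact absurd hym hvn.not_gt

theorem edist_ne_edist_of_adj_of_colorable_two (hG : G.Colorable 2) (huv : G.Adj u v)
    (hu : G.Reachable u r) : G.edist u r ≠ G.edist v r := by
  intro heq
  obtain ⟨p, hp⟩ := hu.exists_walk_length_eq_edist
  obtain ⟨q, hq⟩ := (huv.symm.reachable.trans hu).exists_walk_length_eq_edist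
  have hlength : p.length = q.length := by exact_mod_cast hp.trans (heq.trans hq.symm)
  have heven : Even ((q.append p.reverse).cons huv).length :=
    SimpleGraph.two_colorable_iff_forall_loop_even.1 hG u _
  rw [SimpleGraph.Walk.length_cons, SimpleGraph.Walk.length_append,
    SimpleGraph.Walk.length_reverse, hlength] at heven
  exact Nat.not_even_iff_odd.2 (Even.add_self _).add_one heven

theorem mk_mem_sUnion_ballCuts_of_edist_lt (huv : G.Adj u v) (hlt : G.edist v r < G.edist u r) :
    s(u, v) ∈ ⋃₀ ballCuts G r := by
  have hu : u ∉ G.ball r (G.edist u r) := lt_irrefl (G.edist u r)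
  have hv : v ∉ G.componentComplMk hu := fun hv =>
    SimpleGraph.ComponentCompl.notMem_of_mem hv hlt
  exact ⟨_, ⟨_, pos_of_gt hlt, _, rfl⟩,
    mem_edgeBoundary.2 ⟨u, G.componentComplMk_mem hu, v, hv, huv, rfl⟩⟩

theorem sUnion_ballCuts (hG : G.Preconnected) (hcol : G.Colorable 2) :
    ⋃₀ ballCuts G r = G.edgeSet := by
  refine Set.Subset.antisymm (Set.sUnion_subset fun C hC => (isCut_of_mem_ballCuts hG hC).1) ?_
  intro e he
  induction e with | _ u v
  have huv : G.Adj u v := he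
  obtain hlt | hlt := (edist_ne_edist_of_adj_of_colorable_two hcol huv (hG u r)).lt_or_gt
  · rw [Sym2.eq_swap]
    exact mk_mem_sUnion_ballCuts_of_edist_lt huv.symm hlt
  · exact mk_mem_sUnion_ballCuts_of_edist_lt huv hlt

theorem isCutPartition_ballCuts (hG : G.Preconnected) (hcol : G.Colorable 2) (r : V) :
    IsCutPartition G (ballCuts G r) :=
  ⟨fun _ => isCut_of_mem_ballCuts hG, pairwiseDisjoint_ballCuts, sUnion_ballCuts hG hcol⟩

end

theorem bipartite_iff_exists_cutPartition_general {V : Type*} (G : SimpleGraph V)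
    (hconn : G.Connected) :
    G.Colorable 2 ↔ ∃ 𝒞 : Set (Set (Sym2 V)), IsCutPartition G 𝒞 := by
  obtain ⟨r⟩ := hconn.nonempty
  exact ⟨fun hcol => ⟨ballCuts G r, isCutPartition_ballCuts hconn.preconnected hcol r⟩,
    fun ⟨_, h⟩ => h.colorable_two hconn⟩

/-- A finite connected simple graph is bipartite iff it has a cut-partition. -/
theorem bipartite_iff_exists_cutPartition {V : Type*} [Fintype V] (G : SimpleGraph V)
    (hconn : G.Connected) :
    G.Colorable 2 ↔ ∃ 𝒞 : Set (Set (Sym2 V)), IsCutPartition G 𝒞 :=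
  bipartite_iff_exists_cutPartition_general G hconn
end

section
/- A finite connected simple graph G is a partial cube if and only if G admits a cut-partition 𝒞 such that no shortest path in G uses two edges of the same cut C ∈ 𝒞. -/
open Classical in
/-- The number of edges of a walk (with multiplicity) belonging to a given edge set. -/
noncomputable def cutUse {V : Type*} (G : SimpleGraph V) {u w : V} (p : G.Walk u w)
    (C : Set (Sym2 V)) : ℕ :=
  p.edges.countP fun e => decide (e ∈ C)

/-- A partial cube: a graph admitting an isometric embedding into a hypercube. -/
def IsPartialCube {V : Type*} (G : SimpleGraph V) : Prop :=
  ∃ (d : ℕ) (φ : V → Fin d → Bool), ∀ u v : V, G.dist u v = hammingDist (φ u) (φ v)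

/-!
Give each vertex a Boolean vector, every edge changing exactly one coordinate, and label each edge
with the coordinate it changes. Two vertices then differ in coordinate `i` iff a walk between them
meets the label `i` an odd number of times. So the labels of a geodesic are pairwise distinct iff
its ends differ in exactly as many coordinates as it has edges: the vectors embed `G` isometrically
iff no geodesic repeats a label.

In a cut-partition every cut is the set of edges between its two sides, so the sides provide such
vectors. Conversely, if no geodesic crosses between the two sides of a coordinate twice, a geodesic
with both ends on one side never leaves it, so both sides are connected and the edges between them
form a cut.
-/

universe u

section Coboundary

variable {V : Type*} {G : SimpleGraph V} {f : V → Bool} {C : Set (Sym2 V)} {u v w : V}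

/-- The edges of `G` joining the two sides of the bipartition of the vertices described by `f`.
With `Bool` read as `𝔽₂`, this is the support of the coboundary of the `0`-cochain `f`. -/
def coboundary {V : Type*} (G : SimpleGraph V) (f : V → Bool) : Set (Sym2 V) :=
  {e ∈ G.edgeSet | ¬ (e.map f).IsDiag}

theorem coboundary_subset_edgeSet (G : SimpleGraph V) (f : V → Bool) :
    coboundary G f ⊆ G.edgeSet :=
  Set.sep_subset _ _

theorem mk_mem_coboundary_iff (h : G.Adj u v) : s(u, v) ∈ coboundary G f ↔ f u ≠ f v := by
  simp [coboundary, h]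

theorem eq_of_reachable_deleteEdges_coboundary
    (h : (G.deleteEdges (coboundary G f)).Reachable u w) : f u = f w := by
  obtain ⟨p⟩ := h
  induction p with
  | nil => rfl
  | cons hadj _ ih =>
    obtain ⟨hG, hf⟩ := SimpleGraph.deleteEdges_adj.1 hadj
    rw [← ih]
    by_contra hne
    exact hf ((mk_mem_coboundary_iff hG).2 hne)

theorem IsCut.exists_coboundary_eq (hC : IsCut G C) : ∃ f : V → Bool, coboundary G f = C := by
  classical
  obtain ⟨-, hdisconn, hmin⟩ := hC
  obtain _ | _ := isEmpty_or_nonempty V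
  · exact ⟨isEmptyElim, Subsingleton.elim _ _⟩
  obtain ⟨x, y, hxy⟩ : ∃ x y, ¬ (G.deleteEdges C).Reachable x y := by
    by_contra! hreach
    exact hdisconn ⟨hreach⟩
  let f : V → Bool := fun v => decide ((G.deleteEdges C).Reachable x v)
  have hsub : coboundary G f ⊆ C := by
    rintro ⟨a, b⟩ hab
    by_contra hC
    have hadj : G.Adj a b := hab.1
    have hdel := (SimpleGraph.deleteEdges_adj.2 ⟨hadj, hC⟩).reachable
    exact (mk_mem_coboundary_iff hadj).1 hab
      (decide_eq_decide.2 ⟨fun h => h.trans hdel, fun h => h.trans hdel.symm⟩)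
  refine ⟨f, hsub.eq_of_not_ssubset fun hlt => hxy ?_⟩
  have hfxy : f x = f y :=
    eq_of_reachable_deleteEdges_coboundary ((hmin _ hlt).preconnected x y)
  exact (decide_eq_decide.1 hfxy).1 .rfl

theorem isCut_coboundary (hne : (coboundary G f).Nonempty)
    (hside : ∀ u w, f u = f w → (G.deleteEdges (coboundary G f)).Reachable u w) :
    IsCut G (coboundary G f) := by
  refine ⟨coboundary_subset_edgeSet G f, fun hconn => ?_, fun C hC => ?_⟩
  · obtain ⟨⟨a, b⟩, hab⟩ := hne
    exact (mk_mem_coboundary_iff hab.1).1 hab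
      (eq_of_reachable_deleteEdges_coboundary (hconn.preconnected a b))
  · obtain ⟨hle, ⟨a, b⟩, hab, habC⟩ := Set.ssubset_iff_exists.1 hC
    have hsameSide : ∀ u w, f u = f w → (G.deleteEdges C).Reachable u w := fun u w huw =>
      (hside u w huw).mono (G.deleteEdges_anti hle)
    have hcross : (G.deleteEdges C).Reachable a b :=
      (SimpleGraph.deleteEdges_adj.2 ⟨hab.1, habC⟩).reachable
    have hfab : f a ≠ f b := (mk_mem_coboundary_iff hab.1).1 hab
    have hreach : ∀ v, (G.deleteEdges C).Reachable a v := fun v => by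
      by_cases hav : f a = f v
      · exact hsameSide a v hav
      · have hbv : f b = f v :=
          (Bool.eq_not_iff.2 hfab.symm).trans (Bool.eq_not_iff.2 (Ne.symm hav)).symm
        exact hcross.trans (hsameSide b v hbv)
    have : Nonempty V := ⟨a⟩
    exact ⟨fun u w => (hreach u).symm.trans (hreach w)⟩

end Coboundary

section CutUse

variable {V ι : Type*} {G : SimpleGraph V} {f : V → Bool} {C : Set (Sym2 V)} {u v w : V}

open Classical in
theorem cutUse_cons (h : G.Adj u v) (p : G.Walk v w) (C : Set (Sym2 V)) :
    cutUse G (p.cons h) C = cutUse G p C + if s(u, v) ∈ C then 1 else 0 := by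
  simp [cutUse, List.countP_cons]

theorem cutUse_eq_zero_iff (p : G.Walk u w) : cutUse G p C = 0 ↔ ∀ e ∈ p.edges, e ∉ C := by
  simp [cutUse, List.countP_eq_zero]

theorem odd_cutUse_coboundary_iff (p : G.Walk u w) :
    Odd (cutUse G p (coboundary G f)) ↔ f u ≠ f w := by
  induction p with
  | nil => simp [cutUse]
  | @cons a b c h p ih =>
    by_cases hab : f a = f b
    · simpa [cutUse_cons, mk_mem_coboundary_iff h, hab] using ih
    · rw [cutUse_cons, if_pos ((mk_mem_coboundary_iff h).2 hab), Nat.odd_add_one, ih]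
      cases hfa : f a <;> cases hfb : f b <;> cases hfc : f c <;> simp_all

/-- No shortest path of `G` uses two edges of `C`. When `C` is a cut, this says that both of its
sides are geodesically convex. -/
def CrossedAtMostOnce {V : Type*} (G : SimpleGraph V) (C : Set (Sym2 V)) : Prop :=
  ∀ (u w : V) (p : G.Walk u w), p.length = G.dist u w → cutUse G p C ≤ 1

theorem CrossedAtMostOnce.isCut (hconn : G.Connected)
    (h : CrossedAtMostOnce G (coboundary G f)) (hne : (coboundary G f).Nonempty) :
    IsCut G (coboundary G f) := by
  refine isCut_coboundary hne fun u w huw => ?_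
  obtain ⟨p, hp⟩ := hconn.exists_walk_length_eq_dist u w
  have hone : cutUse G p (coboundary G f) ≤ 1 := h u w p hp
  have heven : ¬ Odd (cutUse G p (coboundary G f)) := fun hodd =>
    (odd_cutUse_coboundary_iff p).1 hodd huw
  have hzero : cutUse G p (coboundary G f) = 0 := by
    rw [Nat.odd_iff] at heven
    omega
  exact ⟨p.toDeleteEdges _ ((cutUse_eq_zero_iff p).1 hzero)⟩

theorem encard_setOf_odd_count_eq_length_iff [DecidableEq ι] (l : List ι) :
    {i | Odd (l.count i)}.encard = l.length ↔ l.Nodup := by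
  refine ⟨fun h => ?_, fun h => ?_⟩
  · have hsub : {i | Odd (l.count i)} ⊆ (l.toFinset : Set ι) := fun i hi => by
      simpa using List.count_pos_iff.1 (Odd.pos hi)
    have hle : l.length ≤ l.toFinset.card := by
      have := Set.encard_le_encard hsub
      rwa [h, Set.encard_coe_eq_coe_finsetCard, Nat.cast_le] at this
    exact Multiset.toFinset_card_eq_card_iff_nodup.1 (le_antisymm l.toFinset_card_le hle)
  · have heq : {i | Odd (l.count i)} = (l.toFinset : Set ι) := by
      ext i
      by_cases hi : i ∈ l <;> simp [List.Nodup.count h, hi]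
    rw [heq, Set.encard_coe_eq_coe_finsetCard, List.toFinset_card_of_nodup h]

theorem exists_list_count_eq_cutUse [DecidableEq ι] {C : ι → Set (Sym2 V)}
    (hC : ∀ e ∈ G.edgeSet, ∃! i, e ∈ C i) (p : G.Walk u w) :
    ∃ l : List ι, l.length = p.length ∧ ∀ i, l.count i = cutUse G p (C i) := by
  induction p with
  | nil => exact ⟨[], by simp [cutUse]⟩
  | @cons a b c h p ih =>
    obtain ⟨l, hlen, hcount⟩ := ih
    obtain ⟨i, hi, huniq⟩ := hC s(a, b) h
    refine ⟨i :: l, by simp [hlen], fun j => ?_⟩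
    have hmem : s(a, b) ∈ C j ↔ i = j := ⟨fun hj => (huniq j hj).symm, fun hij => hij ▸ hi⟩
    simp [cutUse_cons, hcount, hmem, List.count_cons]

theorem encard_setOf_odd_cutUse_eq_length_iff {C : ι → Set (Sym2 V)}
    (hC : ∀ e ∈ G.edgeSet, ∃! i, e ∈ C i) (p : G.Walk u w) :
    {i | Odd (cutUse G p (C i))}.encard = p.length ↔ ∀ i, cutUse G p (C i) ≤ 1 := by
  classical
  obtain ⟨l, hlen, hcount⟩ := exists_list_count_eq_cutUse hC p
  simp only [← hcount, ← hlen]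
  rw [encard_setOf_odd_count_eq_length_iff, List.nodup_iff_count_le_one]

end CutUse

section HypercubeEmbedding

variable {V ι κ : Type*} {G : SimpleGraph V} {φ : V → ι → Bool}

/-- `φ` is an isometric embedding of `G` into the hypercube with coordinate set `ι`, which may be
infinite: Hamming distances are therefore measured in `ℕ∞`. -/
def IsHypercubeEmbedding {V ι : Type*} (G : SimpleGraph V) (φ : V → ι → Bool) : Prop :=
  ∀ u v, {i | φ u i ≠ φ v i}.encard = G.dist u v

theorem encard_setOf_ne_eq_hammingDist [Fintype ι] (x y : ι → Bool) :
    {i | x i ≠ y i}.encard = hammingDist x y := by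
  rw [hammingDist, ← Set.encard_coe_eq_coe_finsetCard, Finset.coe_filter_univ]

theorem isPartialCube_iff_exists_fin :
    IsPartialCube G ↔ ∃ (d : ℕ) (φ : V → Fin d → Bool), IsHypercubeEmbedding G φ := by
  simp only [IsPartialCube, IsHypercubeEmbedding, encard_setOf_ne_eq_hammingDist, Nat.cast_inj,
    eq_comm]

namespace IsHypercubeEmbedding

theorem comp (hφ : IsHypercubeEmbedding G φ) {g : κ → ι} (hg : g.Injective)
    (hrange : ∀ i, (∃ u v, φ u i ≠ φ v i) → i ∈ Set.range g) :
    IsHypercubeEmbedding G fun v => φ v ∘ g := fun u v =>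
  (Set.encard_preimage_of_injective_subset_range hg fun i hi => hrange i ⟨u, v, hi⟩).trans (hφ u v)

theorem finite_setOf_ne [Finite V] (hφ : IsHypercubeEmbedding G φ) :
    {i | ∃ u v, φ u i ≠ φ v i}.Finite := by
  simp only [Set.ofPred_exists]
  exact Set.finite_iUnion fun u => Set.finite_iUnion fun v => Set.finite_of_encard_eq_coe (hφ u v)

theorem existsUnique_mem_coboundary (hφ : IsHypercubeEmbedding G φ) :
    ∀ e ∈ G.edgeSet, ∃! i, e ∈ coboundary G (φ · i) := by
  rintro ⟨a, b⟩ (hab : G.Adj a b)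
  obtain ⟨i, hi⟩ : ∃ i, {i | φ a i ≠ φ b i} = {i} := by
    rw [← Set.encard_eq_one, hφ, SimpleGraph.dist_eq_one_iff_adj.2 hab, Nat.cast_one]
  have hmem : ∀ j, s(a, b) ∈ coboundary G (φ · j) ↔ j = i := fun j =>
    (mk_mem_coboundary_iff hab).trans (Set.ext_iff.1 hi j)
  exact ⟨i, (hmem i).2 rfl, fun j => (hmem j).1⟩

end IsHypercubeEmbedding

theorem isPartialCube_iff_exists_isHypercubeEmbedding {V : Type u} [Finite V]
    (G : SimpleGraph V) :
    IsPartialCube G ↔ ∃ (ι : Type u) (φ : V → ι → Bool), IsHypercubeEmbedding G φ := by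
  rw [isPartialCube_iff_exists_fin]
  constructor
  · rintro ⟨d, φ, hφ⟩
    exact ⟨ULift (Fin d), _, hφ.comp Equiv.ulift.injective fun i _ => Equiv.ulift.surjective i⟩
  · rintro ⟨ι, φ, hφ⟩
    have : Finite {i | ∃ u v, φ u i ≠ φ v i} := hφ.finite_setOf_ne
    obtain ⟨d, ⟨σ⟩⟩ := Finite.exists_equiv_fin {i | ∃ u v, φ u i ≠ φ v i}
    exact ⟨d, _, hφ.comp (Subtype.val_injective.comp σ.symm.injective) fun i hi =>
      ⟨σ ⟨i, hi⟩, by simp⟩⟩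

theorem isHypercubeEmbedding_iff_crossedAtMostOnce (hconn : G.Connected)
    (hφ : ∀ e ∈ G.edgeSet, ∃! i, e ∈ coboundary G (φ · i)) :
    IsHypercubeEmbedding G φ ↔ ∀ i, CrossedAtMostOnce G (coboundary G (φ · i)) := by
  have hgeodesic {u w : V} (p : G.Walk u w) (hp : p.length = G.dist u w) :
      {i | φ u i ≠ φ w i}.encard = G.dist u w ↔
        ∀ i, cutUse G p (coboundary G (φ · i)) ≤ 1 := by
    simpa only [odd_cutUse_coboundary_iff, hp] using encard_setOf_odd_cutUse_eq_length_iff hφ p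
  refine ⟨fun h i u w p hp => (hgeodesic p hp).1 (h u w) i, fun h u w => ?_⟩
  obtain ⟨p, hp⟩ := hconn.exists_walk_length_eq_dist u w
  exact (hgeodesic p hp).2 fun i => h i u w p hp

end HypercubeEmbedding

section CutPartition

variable {V ι : Type*} {G : SimpleGraph V} {𝒞 : Set (Set (Sym2 V))}

theorem IsCutPartition.existsUnique_mem (h : IsCutPartition G 𝒞) :
    ∀ e ∈ G.edgeSet, ∃! C : 𝒞, e ∈ (C : Set (Sym2 V)) := by
  intro e he
  rw [← h.2.2] at he
  obtain ⟨C, hC, heC⟩ := he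
  exact ⟨⟨C, hC⟩, heC, fun D heD => Subtype.ext (h.2.1.elim_set D.2 hC e heD heC)⟩

theorem isCutPartition_range_sdiff_empty {C : ι → Set (Sym2 V)}
    (hcut : ∀ i, (C i).Nonempty → IsCut G (C i)) (hC : ∀ e ∈ G.edgeSet, ∃! i, e ∈ C i) :
    IsCutPartition G (Set.range C \ {∅}) := by
  have hsub : ∀ i, C i ⊆ G.edgeSet := fun i e he => (hcut i ⟨e, he⟩).1 he
  refine ⟨?_, ?_, subset_antisymm ?_ fun e he => ?_⟩
  · rintro _ ⟨⟨i, rfl⟩, hne⟩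
    exact hcut i (Set.nonempty_iff_ne_empty.2 hne)
  · rintro _ ⟨⟨i, rfl⟩, -⟩ _ ⟨⟨j, rfl⟩, -⟩ hij
    refine Set.disjoint_left.2 fun e hei hej => hij ?_
    rw [(hC e (hsub i hei)).unique hei hej]
  · rintro e ⟨_, ⟨⟨i, rfl⟩, -⟩, he⟩
    exact hsub i he
  · obtain ⟨i, hi, -⟩ := hC e he
    exact ⟨C i, ⟨⟨i, rfl⟩, Set.Nonempty.ne_empty ⟨e, hi⟩⟩, hi⟩

theorem IsHypercubeEmbedding.exists_isCutPartition {φ : V → ι → Bool} (hconn : G.Connected)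
    (hφ : IsHypercubeEmbedding G φ) :
    ∃ 𝒞, IsCutPartition G 𝒞 ∧ ∀ C ∈ 𝒞, CrossedAtMostOnce G C := by
  have hlabel := hφ.existsUnique_mem_coboundary
  have hcross := (isHypercubeEmbedding_iff_crossedAtMostOnce hconn hlabel).1 hφ
  refine ⟨_, isCutPartition_range_sdiff_empty (fun i => (hcross i).isCut hconn) hlabel,
    ?_⟩
  rintro _ ⟨⟨i, rfl⟩, -⟩
  exact hcross i

theorem IsCutPartition.exists_isHypercubeEmbedding (hconn : G.Connected)
    (h𝒞 : IsCutPartition G 𝒞) (hcross : ∀ C ∈ 𝒞, CrossedAtMostOnce G C) :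
    ∃ φ : V → 𝒞 → Bool, IsHypercubeEmbedding G φ := by
  choose f hf using fun C : 𝒞 => (h𝒞.1 C C.2).exists_coboundary_eq
  refine ⟨fun v C => f C v, (isHypercubeEmbedding_iff_crossedAtMostOnce hconn ?_).2 fun C => ?_⟩
  · simpa only [hf] using h𝒞.existsUnique_mem
  · simpa only [hf] using hcross C C.2

theorem isPartialCube_iff_cutPartition_general {V : Type u} (G : SimpleGraph V)
    (hconn : G.Connected) :
    (∃ (ι : Type u) (φ : V → ι → Bool), IsHypercubeEmbedding G φ) ↔
      ∃ 𝒞 : Set (Set (Sym2 V)), IsCutPartition G 𝒞 ∧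
        ∀ (u w : V) (p : G.Walk u w), p.length = G.dist u w →
          ∀ C ∈ 𝒞, cutUse G p C ≤ 1 := by
  constructor
  · rintro ⟨ι, φ, hφ⟩
    obtain ⟨𝒞, h𝒞, hcross⟩ := hφ.exists_isCutPartition hconn
    exact ⟨𝒞, h𝒞, fun u w p hp C hC => hcross C hC u w p hp⟩
  · rintro ⟨𝒞, h𝒞, hcross⟩
    exact ⟨𝒞, h𝒞.exists_isHypercubeEmbedding hconn fun C hC u w p hp => hcross u w p hp C hC⟩

end CutPartition

/-- A finite connected simple graph is a partial cube iff it admits a cut-partition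
such that no shortest path uses two edges of the same cut. -/
theorem isPartialCube_iff_cutPartition {V : Type*} [Fintype V] (G : SimpleGraph V)
    (hconn : G.Connected) :
    IsPartialCube G ↔ ∃ 𝒞 : Set (Set (Sym2 V)), IsCutPartition G 𝒞 ∧
      ∀ (u w : V) (p : G.Walk u w), p.length = G.dist u w →
        ∀ C ∈ 𝒞, cutUse G p C ≤ 1 :=
  (isPartialCube_iff_exists_isHypercubeEmbedding G).trans
    (isPartialCube_iff_cutPartition_general G hconn)
end

section
/- Let G be a finite connected simple graph with an isometric embedding φ : V(G) → (Fin d → Bool) into the hypercube (graph distance in G equals Hamming distance of images). For each coordinate i ∈ Fin d, let C_i be the set of edges {u,w} of G with φ(u) i ≠ φ(w) i. Then every nonempty C_i is a cut of G (an inclusion-minimal edge set whose removal disconnects G), and the nonempty sets C_i form a cut-partition of G. -/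
/-- The set of edges of `G` whose endpoints differ in coordinate `i` of the embedding `φ`. -/
def coordCut {V : Type*} (G : SimpleGraph V) {d : ℕ} (φ : V → Fin d → Bool) (i : Fin d) :
    Set (Sym2 V) :=
  {e : Sym2 V | e ∈ G.edgeSet ∧ ∃ u w : V, e = s(u, w) ∧ φ u i ≠ φ w i}

/-!
A geodesic never changes a coordinate that agrees at its two ends: each of its vertices attains
equality in the Hamming triangle inequality, hence lies coordinatewise between the ends. Deleting
the edges that flip coordinate `i` therefore leaves exactly the two fibres of that coordinate, each
connected, and any single deleted edge joins them again. An edge flips exactly one coordinate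
because its ends are at Hamming distance one.
-/

section Hamming

variable {ι : Type*} [Fintype ι] {β : ι → Type*} [∀ i, DecidableEq (β i)] {x y z : ∀ i, β i}

theorem hammingDist_eq_one_iff : hammingDist x y = 1 ↔ ∃! i, x i ≠ y i := by
  simp only [hammingDist, Finset.card_eq_one, Finset.singleton_iff_unique_mem,
    Finset.mem_filter_univ]

theorem apply_eq_left_of_hammingDist_add_eq
    (h : hammingDist x y + hammingDist y z = hammingDist x z) {i : ι} (hi : x i = z i) :
    y i = x i := by
  classical
  by_contra hne
  have hssub : ({j | x j ≠ z j} : Finset ι) ⊂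
      ({j | x j ≠ y j} : Finset ι) ∪ ({j | y j ≠ z j} : Finset ι) :=
    (Finset.ssubset_iff_of_subset fun j => by grind).2 ⟨i, by grind, by grind⟩
  have hlt : hammingDist x z < hammingDist x y + hammingDist y z :=
    (Finset.card_lt_card hssub).trans_le (Finset.card_union_le _ _)
  exact hlt.ne' h

end Hamming

section Graph

variable {V : Type*} {G : SimpleGraph V}

theorem dist_add_dist_of_mem_support {u v w : V} {p : G.Walk u v}
    (hp : p.length = G.dist u v) (hw : w ∈ p.support) :
    G.dist u w + G.dist w v = G.dist u v := by
  classical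
  rw [← SimpleGraph.length_eq_dist_of_subwalk hp (p.isSubwalk_takeUntil hw),
    ← SimpleGraph.length_eq_dist_of_subwalk hp (p.isSubwalk_dropUntil hw),
    ← SimpleGraph.Walk.length_append, p.take_spec hw, hp]

/-- The edges of `G` joining two different fibres of the vertex labelling `f`; for a two-valued
`f`, this is the edge boundary of either fibre. -/
def crossingEdges {α : Type*} (G : SimpleGraph V) (f : V → α) : Set (Sym2 V) :=
  {e ∈ G.edgeSet | ¬ (e.map f).IsDiag}

theorem mk_mem_crossingEdges {α : Type*} {f : V → α} {u v : V} :
    s(u, v) ∈ crossingEdges G f ↔ G.Adj u v ∧ f u ≠ f v :=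
  Iff.rfl

theorem apply_eq_of_reachable_deleteEdges_crossingEdges {α : Type*} {f : V → α} {u v : V}
    (h : (G.deleteEdges (crossingEdges G f)).Reachable u v) : f u = f v := by
  obtain ⟨p⟩ := h
  induction p with
  | nil => rfl
  | cons hadj _ ih =>
    rw [SimpleGraph.deleteEdges_adj, mk_mem_crossingEdges] at hadj
    exact (not_not.1 fun hne => hadj.2 ⟨hadj.1, hne⟩).trans ih

theorem isCut_crossingEdges {f : V → Bool}
    (hf : ∀ u v, f u = f v → (G.deleteEdges (crossingEdges G f)).Reachable u v)
    (hne : (crossingEdges G f).Nonempty) : IsCut G (crossingEdges G f) := by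
  refine ⟨Set.sep_subset _ _, fun hconn => ?_, fun C' hC' => ?_⟩
  · obtain ⟨⟨a, b⟩, -, hab⟩ := hne
    exact hab (apply_eq_of_reachable_deleteEdges_crossingEdges (hconn a b))
  · obtain ⟨⟨a, b⟩, hmem, hnotMem⟩ := Set.exists_of_ssubset hC'
    obtain ⟨hadj, hab⟩ := mk_mem_crossingEdges.1 hmem
    have reachable_of_eq {u v : V} (huv : f u = f v) : (G.deleteEdges C').Reachable u v :=
      (hf u v huv).mono (SimpleGraph.deleteEdges_anti hC'.subset)
    have reachable_ab : (G.deleteEdges C').Reachable a b :=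
      (SimpleGraph.deleteEdges_adj.2 ⟨hadj, hnotMem⟩).reachable
    refine SimpleGraph.connected_iff_exists_forall_reachable _ |>.2 ⟨a, fun v => ?_⟩
    obtain hv | hv : f a = f v ∨ f b = f v := by cases h : f v <;> grind
    · exact reachable_of_eq hv
    · exact reachable_ab.trans (reachable_of_eq hv)

theorem isCutPartition_of_existsUnique_mem {ι : Type*} {C : ι → Set (Sym2 V)}
    (hcut : ∀ i, (C i).Nonempty → IsCut G (C i)) (hmem : ∀ e ∈ G.edgeSet, ∃! i, e ∈ C i) :
    IsCutPartition G {D | ∃ i, (C i).Nonempty ∧ D = C i} := by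
  refine ⟨?_, ?_, Set.Subset.antisymm ?_ fun e he => ?_⟩
  · rintro _ ⟨i, hi, rfl⟩
    exact hcut i hi
  · rintro _ ⟨i, hi, rfl⟩ _ ⟨j, -, rfl⟩ hij
    refine Set.disjoint_left.2 fun e hei hej => hij ?_
    rw [(hmem e ((hcut i hi).1 hei)).unique hei hej]
  · rintro e ⟨_, ⟨i, hi, rfl⟩, he⟩
    exact (hcut i hi).1 he
  · obtain ⟨i, hi, -⟩ := hmem e he
    exact ⟨C i, ⟨i, ⟨e, hi⟩, rfl⟩, hi⟩

end Graph

section Isometry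

variable {V : Type*} {G : SimpleGraph V} {ι : Type*} [Fintype ι] {β : ι → Type*}
  [∀ i, DecidableEq (β i)] {φ : V → ∀ i, β i}

theorem reachable_deleteEdges_crossingEdges_of_apply_eq
    (hφ : ∀ u v, G.dist u v = hammingDist (φ u) (φ v)) {u v : V} (huv : G.Reachable u v) {i : ι}
    (hi : φ u i = φ v i) : (G.deleteEdges (crossingEdges G (φ · i))).Reachable u v := by
  obtain ⟨p, hp⟩ := huv.exists_walk_length_eq_dist
  have apply_eq {w : V} (hw : w ∈ p.support) : φ w i = φ u i :=
    apply_eq_left_of_hammingDist_add_eq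
      (by simpa only [hφ] using dist_add_dist_of_mem_support hp hw) hi
  refine (p.toDeleteEdges _ ?_).reachable
  rintro ⟨a, b⟩ hmem ⟨-, hab⟩
  exact hab ((apply_eq (p.fst_mem_support_of_mem_edges hmem)).trans
    (apply_eq (p.snd_mem_support_of_mem_edges hmem)).symm)

theorem existsUnique_mem_crossingEdges
    (hφ : ∀ u v, G.dist u v = hammingDist (φ u) (φ v)) {e : Sym2 V} (he : e ∈ G.edgeSet) :
    ∃! i, e ∈ crossingEdges G (φ · i) := by
  induction e with
  | _ u v =>
    rw [SimpleGraph.mem_edgeSet] at he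
    have hdist : hammingDist (φ u) (φ v) = 1 := hφ u v ▸ SimpleGraph.dist_eq_one_iff_adj.2 he
    simpa only [mk_mem_crossingEdges, he, true_and] using hammingDist_eq_one_iff.1 hdist

end Isometry

theorem coordCut_eq_crossingEdges {V : Type*} (G : SimpleGraph V) {d : ℕ}
    (φ : V → Fin d → Bool) (i : Fin d) : coordCut G φ i = crossingEdges G (φ · i) := by
  ext ⟨a, b⟩
  refine and_congr_right fun _ => ⟨?_, fun hab => ⟨a, b, rfl, hab⟩⟩
  rintro ⟨u, w, huw, hne⟩
  rw [huw]
  exact hne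

/-- Given an isometric embedding of a finite connected graph into a hypercube, every
nonempty coordinate edge class is a cut, and these classes form a cut-partition. -/
theorem coordCut_isCutPartition {V : Type*} [Fintype V] (G : SimpleGraph V)
    (hconn : G.Connected) {d : ℕ} (φ : V → Fin d → Bool)
    (hφ : ∀ u v : V, G.dist u v = hammingDist (φ u) (φ v)) :
    (∀ i : Fin d, (coordCut G φ i).Nonempty → IsCut G (coordCut G φ i)) ∧
    IsCutPartition G {C : Set (Sym2 V) | ∃ i : Fin d,
      (coordCut G φ i).Nonempty ∧ C = coordCut G φ i} := by
  simp only [coordCut_eq_crossingEdges]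
  have hcut (i : Fin d) (hne : (crossingEdges G (φ · i)).Nonempty) :
      IsCut G (crossingEdges G (φ · i)) :=
    isCut_crossingEdges
      (fun u v => reachable_deleteEdges_crossingEdges_of_apply_eq hφ (hconn u v)) hne
  exact ⟨hcut, isCutPartition_of_existsUnique_mem hcut fun _ => existsUnique_mem_crossingEdges hφ⟩
end

section
/- Let L be a finite lattice with greatest element ⊤ and let H be a set of atoms of L such that the supremum of H equals ⊤ and no proper subset of H has supremum ⊤. Then the map assigning to each subset S ⊆ H its supremum is injective; in particular 2^{|H|} ≤ |L|. -/
/-!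
If a member of an irredundant family lay below the join of a subfamily not containing it, it could
be discarded without changing the total join, contradicting irredundancy. So every subfamily
consists of exactly those members of the family that lie below its join, and is determined by it.
-/

section IrredundantJoin

variable {ι α : Type*} [SemilatticeSup α] [OrderBot α] {s t u : Finset ι} {f : ι → α} {a : ι}

theorem sup_erase_eq_sup_of_le [DecidableEq ι] (ha : a ∈ s) (hle : f a ≤ (s.erase a).sup f) :
    (s.erase a).sup f = s.sup f := by
  conv_rhs => rw [← Finset.insert_erase ha, Finset.sup_insert, sup_eq_right.2 hle]

theorem le_sup_iff_mem_of_forall_ssubset_sup_ne (hmin : ∀ r ⊂ s, r.sup f ≠ s.sup f)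
    (ht : t ⊆ s) (ha : a ∈ s) : f a ≤ t.sup f ↔ a ∈ t := by
  classical
  refine ⟨fun hle => by_contra fun hat => ?_, Finset.le_sup⟩
  have ht_erase : t ⊆ s.erase a := Finset.subset_erase.2 ⟨ht, hat⟩
  exact hmin _ (Finset.erase_ssubset ha)
    (sup_erase_eq_sup_of_le ha (hle.trans (Finset.sup_mono ht_erase)))

theorem sup_le_sup_iff_subset_of_forall_ssubset_sup_ne (hmin : ∀ r ⊂ s, r.sup f ≠ s.sup f)
    (ht : t ⊆ s) (hu : u ⊆ s) : t.sup f ≤ u.sup f ↔ t ⊆ u :=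
  Finset.sup_le_iff.trans <| forall₂_congr fun _ ha =>
    le_sup_iff_mem_of_forall_ssubset_sup_ne hmin hu (ht ha)

theorem injOn_sup_powerset_of_forall_ssubset_sup_ne (hmin : ∀ r ⊂ s, r.sup f ≠ s.sup f) :
    Set.InjOn (fun t => t.sup f) (s.powerset : Set (Finset ι)) := by
  intro t ht u hu heq
  have hts : t ⊆ s := Finset.mem_powerset.1 ht
  have hus : u ⊆ s := Finset.mem_powerset.1 hu
  exact Finset.Subset.antisymm
    ((sup_le_sup_iff_subset_of_forall_ssubset_sup_ne hmin hts hus).1 heq.le)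
    ((sup_le_sup_iff_subset_of_forall_ssubset_sup_ne hmin hus hts).1 heq.ge)

end IrredundantJoin

theorem two_pow_card_le_card_of_injOn_powerset {ι α : Type*} {s : Finset ι} {g : Finset ι → α}
    (hg : Set.InjOn g (s.powerset : Set (Finset ι))) : 2 ^ s.card ≤ ENat.card α :=
  calc (2 : ℕ∞) ^ s.card = (s.powerset : Set (Finset ι)).encard := by
        rw [Set.encard_coe_eq_coe_finsetCard, Finset.card_powerset, Nat.cast_pow, Nat.cast_ofNat]
    _ = (g '' s.powerset).encard := hg.encard_image.symm
    _ ≤ ENat.card α := Set.encard_le_card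

theorem sup_injective_of_minimal_atom_set_general {ι α : Type*} [SemilatticeSup α] [OrderBot α]
    {s : Finset ι} {f : ι → α} (hmin : ∀ r ⊂ s, r.sup f ≠ s.sup f) :
    Set.InjOn (fun t => t.sup f) (s.powerset : Set (Finset ι)) ∧ 2 ^ s.card ≤ ENat.card α :=
  have hinj := injOn_sup_powerset_of_forall_ssubset_sup_ne hmin
  ⟨hinj, two_pow_card_le_card_of_injOn_powerset hinj⟩

/-- In a finite lattice, if `H` is a set of atoms whose supremum is `⊤` while no
proper subset of `H` has supremum `⊤`, then distinct subsets of `H` have distinct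
suprema; in particular `2 ^ |H| ≤ |L|`. -/
theorem sup_injective_of_minimal_atom_set {L : Type*} [Fintype L] [Lattice L]
    [BoundedOrder L] (H : Finset L) (hatoms : ∀ a ∈ H, IsAtom a)
    (hsup : H.sup id = ⊤) (hmin : ∀ H' : Finset L, H' ⊂ H → H'.sup id ≠ ⊤) :
    (∀ S T : Finset L, S ⊆ H → T ⊆ H → S.sup id = T.sup id → S = T) ∧
      2 ^ H.card ≤ Fintype.card L := by
  obtain ⟨hinj, hcard⟩ := sup_injective_of_minimal_atom_set_general (hsup.symm ▸ hmin)
  exact ⟨fun S T hS hT => hinj (Finset.mem_powerset.2 hS) (Finset.mem_powerset.2 hT),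
    by exact_mod_cast ENat.card_eq_coe_fintype_card (α := L) ▸ hcard⟩
end

section
/- Let L be a finite atomistic lattice, i.e., every element of L is the supremum of the atoms below it. Then there exists a set H of atoms of L with supremum equal to the greatest element ⊤ and 2^{|H|} ≤ |L|; in particular, the minimum size of a set of atoms whose supremum is ⊤ is at most log₂ |L|. -/
/-!
Let `s` be a minimal set with supremum `x`. No member of `s` lies below the supremum of the others,
so a subset of `s` can be recovered from its supremum as the set of members of `s` below it. Hence
the `2 ^ |s|` subsets of `s` have distinct suprema.
-/

section MinimalSup

variable {α ι : Type*} [SemilatticeSup α] [OrderBot α] {f : ι → α} {x : α} {s t u : Finset ι}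

theorem mem_of_le_sup_of_minimal (hs : Minimal (fun v : Finset ι => v.sup f = x) s) (ht : t ⊆ s)
    {i : ι} (hi : i ∈ s) (hle : f i ≤ t.sup f) : i ∈ t := by
  classical
  by_contra hit
  have hle_erase : f i ≤ (s.erase i).sup f :=
    hle.trans (Finset.sup_mono (Finset.subset_erase.2 ⟨ht, hit⟩))
  have hsup_erase : (s.erase i).sup f = x :=
    calc (s.erase i).sup f
      _ = f i ⊔ (s.erase i).sup f := (sup_eq_right.2 hle_erase).symm
      _ = (insert i (s.erase i)).sup f := Finset.sup_insert.symm
      _ = x := by rw [Finset.insert_erase hi, hs.prop]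
  exact Finset.notMem_erase i s (hs.le_of_le hsup_erase (Finset.erase_subset i s) hi)

theorem sup_le_sup_iff_subset_of_minimal (hs : Minimal (fun v : Finset ι => v.sup f = x) s)
    (ht : t ⊆ s) (hu : u ⊆ s) : t.sup f ≤ u.sup f ↔ t ⊆ u :=
  ⟨fun hle _ hi => mem_of_le_sup_of_minimal hs hu (ht hi) ((Finset.le_sup hi).trans hle),
    Finset.sup_mono⟩

theorem injOn_sup_powerset_of_minimal (hs : Minimal (fun v : Finset ι => v.sup f = x) s) :
    Set.InjOn (fun t : Finset ι => t.sup f) s.powerset := by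
  intro t ht u hu htu
  replace ht := Finset.mem_powerset.1 ht
  replace hu := Finset.mem_powerset.1 hu
  exact ((sup_le_sup_iff_subset_of_minimal hs ht hu).1 htu.le).antisymm
    ((sup_le_sup_iff_subset_of_minimal hs hu ht).1 htu.ge)

theorem two_pow_card_le_card_of_minimal_sup [Fintype α]
    (hs : Minimal (fun v : Finset ι => v.sup f = x) s) : 2 ^ s.card ≤ Fintype.card α := by
  rw [← Finset.card_powerset]
  exact Finset.card_le_card_of_injOn _ (fun _ _ => Finset.mem_univ _)
    (injOn_sup_powerset_of_minimal hs)

end MinimalSup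

theorem exists_atom_set_sup_top_card_le_general {L : Type*} [Fintype L] [SemilatticeSup L]
    [OrderBot L] {p : L → Prop} {x : L} {S : Finset L} (hS : ∀ a ∈ S, p a) (hx : S.sup id = x) :
    (∃ H : Finset L, (∀ a ∈ H, p a) ∧ H.sup id = x ∧ 2 ^ H.card ≤ Fintype.card L) ∧
      sInf {n : ℕ | ∃ H : Finset L, (∀ a ∈ H, p a) ∧ H.sup id = x ∧ H.card = n} ≤
        Nat.log 2 (Fintype.card L) := by
  obtain ⟨H, hHS, hmin⟩ :=
    exists_minimal_le_of_wellFoundedLT (fun s : Finset L => s.sup id = x) S hx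
  have hp : ∀ a ∈ H, p a := fun a ha => hS a (hHS ha)
  have hcard : 2 ^ H.card ≤ Fintype.card L := two_pow_card_le_card_of_minimal_sup hmin
  refine ⟨⟨H, hp, hmin.prop, hcard⟩, ?_⟩
  calc sInf {n : ℕ | ∃ H : Finset L, (∀ a ∈ H, p a) ∧ H.sup id = x ∧ H.card = n}
    _ ≤ H.card := Nat.sInf_le ⟨H, hp, hmin.prop, rfl⟩
    _ ≤ Nat.log 2 (Fintype.card L) := Nat.le_log_of_pow_le one_lt_two hcard

open Classical in
/-- In a finite atomistic lattice `L` there is a set `H` of atoms with supremum `⊤`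
and `2 ^ |H| ≤ |L|`; in particular the minimum size of a set of atoms whose
supremum is `⊤` is at most `log₂ |L|`. -/
theorem exists_atom_set_sup_top_card_le {L : Type*} [Fintype L] [Lattice L]
    [BoundedOrder L]
    (hatomistic : ∀ x : L,
      ((Finset.univ : Finset L).filter fun a => IsAtom a ∧ a ≤ x).sup id = x) :
    (∃ H : Finset L, (∀ a ∈ H, IsAtom a) ∧ H.sup id = ⊤ ∧
        2 ^ H.card ≤ Fintype.card L) ∧
      sInf {n : ℕ | ∃ H : Finset L, (∀ a ∈ H, IsAtom a) ∧ H.sup id = ⊤ ∧ H.card = n} ≤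
        Nat.log 2 (Fintype.card L) := by
  exact exists_atom_set_sup_top_card_le_general
    (fun a ha => (Finset.mem_filter.1 ha).2.1) (hatomistic ⊤)
end

section
/- Let G be a finite partial cube, v a vertex of G, and let 𝓛_G^v be the lattice of convex vertex sets of G containing v, ordered by inclusion. For G', G'' ∈ 𝓛_G^v, the element G'' covers G' in 𝓛_G^v if and only if there exists a vertex u ∈ G'' \ G' such that G'' = conv(G' ∪ {u}) and u is adjacent in G to some vertex w ∈ G'. -/
/-- A set of vertices is (geodesically) convex. -/
def GConvex {V : Type*} (G : SimpleGraph V) (S : Set V) : Prop :=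
  ∀ u ∈ S, ∀ w ∈ S, ∀ x : V, G.dist u x + G.dist x w = G.dist u w → x ∈ S

/-- The convex hull of a set of vertices: the smallest convex set containing it. -/
def GConvexHull {V : Type*} (G : SimpleGraph V) (S : Set V) : Set V :=
  ⋂₀ {T : Set V | GConvex G T ∧ S ⊆ T}

/-- Membership in the lattice `𝓛_G^v` of convex vertex sets of `G` containing `v`. -/
def ConvCont {V : Type*} (G : SimpleGraph V) (v : V) (S : Set V) : Prop :=
  GConvex G S ∧ v ∈ S

/-- `B` covers `A` in the inclusion order `𝓛_G^v` on convex sets containing `v`. -/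
def CoversIn {V : Type*} (G : SimpleGraph V) (v : V) (A B : Set V) : Prop :=
  A ⊂ B ∧ ∀ T : Set V, ConvCont G v T → A ⊂ T → T ⊂ B → False

/-!
Write `W a b` for the set of vertices closer to `a` than to `b`. In a partial cube every such set
with `ab` an edge is convex, and its complement is `W b a`. If `wu` is an edge leaving a convex set
`A`, then `A ⊆ W w u`, since a vertex of `A` closer to `u` than to `w` would put `u` on a geodesic
between two vertices of `A`.

Let `T` be convex with `A ⊂ T ⊆ conv (A ∪ {u})`, and let `xy` be an edge with `x ∈ A` and
`y ∈ T \ A`. Then `A ⊆ W x y`, but `u ∉ W x y`, as otherwise `y ∈ conv (A ∪ {u}) ⊆ W x y`. So `w`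
is as far from `x` as `u` is from `y`, one less than the distance from `w` to `y`, which places `u`
on a geodesic from `w` to `y`. Hence `u ∈ T`, and `T` is the whole hull.
-/

section Hamming

variable {ι : Type*} [Fintype ι] {β : ι → Type*} [∀ i, DecidableEq (β i)]

lemma hammingDist_update_eq_add_one [DecidableEq ι] {x z : ∀ i, β i} {i : ι} {b : β i}
    (hz : z i = x i) (hb : x i ≠ b) :
    hammingDist z (Function.update x i b) = hammingDist z x + 1 := by
  have hcoords : ({j | z j ≠ Function.update x i b j} : Finset ι) =
      insert i ({j | z j ≠ x j} : Finset ι) := by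
    ext j
    obtain rfl | hj := eq_or_ne j i
    · simp [hz, hb]
    · simp [hj]
  rw [hammingDist, hcoords, Finset.card_insert_of_notMem (by simp [hz]), hammingDist]

lemma exists_update_eq_of_hammingDist_eq_one [DecidableEq ι] {x y : ∀ i, β i}
    (h : hammingDist x y = 1) : ∃ i, x i ≠ y i ∧ Function.update x i (y i) = y := by
  obtain ⟨i, hi⟩ := Finset.card_eq_one.mp h
  have hne_iff (j : ι) : x j ≠ y j ↔ j = i := by simpa using Finset.ext_iff.mp hi j
  refine ⟨i, (hne_iff i).2 rfl, Function.update_eq_iff.2 ⟨rfl, fun j hj => ?_⟩⟩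
  exact not_not.1 (mt (hne_iff j).1 hj)

lemma apply_eq_of_hammingDist_add_eq {x y z : ∀ i, β i} {i : ι}
    (h : hammingDist x y + hammingDist y z = hammingDist x z) (hxz : x i = z i) :
    y i = x i := by
  classical
  by_contra hne
  -- Correcting the coordinate `i` of `y` would bring it closer to both `x` and `z`.
  let y' := Function.update y i (x i)
  have hcloser {p : ∀ i, β i} (hp : p i = x i) : hammingDist p y = hammingDist p y' + 1 := by
    have hupd : Function.update y' i (y i) = y := by simp [y']
    rw [← hammingDist_update_eq_add_one (i := i) (b := y i) (by simpa [y'] using hp)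
      (by simpa [y'] using Ne.symm hne), hupd]
  have hx : hammingDist x y = hammingDist x y' + 1 := hcloser rfl
  have hz : hammingDist z y = hammingDist z y' + 1 := hcloser hxz.symm
  have htri := hammingDist_triangle_right x z y'
  rw [hammingDist_comm y z] at h
  lia

lemma exists_forall_hammingDist_eq_add_one_or {x y : ι → Bool} (h : hammingDist x y = 1) :
    ∃ i, ∀ z : ι → Bool,
      (z i = x i ∧ hammingDist z y = hammingDist z x + 1) ∨
        (z i ≠ x i ∧ hammingDist z x = hammingDist z y + 1) := by
  classical
  obtain ⟨i, hne, hy⟩ := exists_update_eq_of_hammingDist_eq_one h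
  have hx : Function.update y i (x i) = x := by rw [← hy]; simp
  refine ⟨i, fun z => ?_⟩
  by_cases hz : z i = x i
  · exact .inl ⟨hz, by rw [← hammingDist_update_eq_add_one hz hne, hy]⟩
  · have hzy : z i = y i :=
      (Bool.eq_not_of_ne hz).trans (Bool.eq_not_of_ne hne.symm).symm
    exact .inr ⟨hz, by rw [← hammingDist_update_eq_add_one hzy hne.symm, hx]⟩

end Hamming

section Convexity

variable {V : Type*} {G : SimpleGraph V} {S T : Set V} {u : V}

lemma gConvex_gConvexHull (G : SimpleGraph V) (S : Set V) : GConvex G (GConvexHull G S) :=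
  fun u hu w hw x hx T hT => hT.1 u (hu T hT) w (hw T hT) x hx

lemma subset_gConvexHull (G : SimpleGraph V) (S : Set V) : S ⊆ GConvexHull G S :=
  fun _ hx _ hT => hT.2 hx

lemma gConvexHull_union_singleton_subset_iff (hT : GConvex G T) :
    GConvexHull G (S ∪ {u}) ⊆ T ↔ S ⊆ T ∧ u ∈ T := by
  rw [← Set.singleton_subset_iff, ← Set.union_subset_iff]
  exact ⟨(subset_gConvexHull G _).trans, fun hST _ hx => hx T ⟨hT, hST⟩⟩

lemma GConvex.exists_adj_of_mem_of_notMem (hconn : G.Connected) (hT : GConvex G T) {a t : V}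
    (haS : a ∈ S) (haT : a ∈ T) (htT : t ∈ T) (htS : t ∉ S) :
    ∃ x ∈ S, ∃ y ∈ T \ S, G.Adj x y := by
  obtain ⟨p, hp⟩ := hconn.exists_walk_length_eq_dist a t
  induction p with
  | nil => exact absurd haS htS
  | @cons a b t hab q ih =>
    rw [SimpleGraph.Walk.length_cons] at hp
    have hq := SimpleGraph.dist_le q
    have htri := hconn.dist_triangle (u := a) (v := b) (w := t)
    have hone : G.dist a b = 1 := SimpleGraph.dist_eq_one_iff_adj.2 hab
    have hbT : b ∈ T := hT a haT t htT b (by lia)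
    by_cases hbS : b ∈ S
    · exact ih hbS hbT htT htS (by lia)
    · exact ⟨a, haS, b, ⟨hbT, hbS⟩, hab⟩

end Convexity

section Halfspace

variable {V : Type*} {G : SimpleGraph V} {A : Set V} {a b u w x y : V}

/-- The halfspace `W a b` of the vertices strictly closer to `a` than to `b`, of interest when `ab`
is an edge. It is defined by distances alone, so that it needs no embedding into a hypercube. -/
def GHalfspace (G : SimpleGraph V) (a b : V) : Set V :=
  {x | G.dist x a < G.dist x b}

lemma mem_gHalfspace_iff_dist_eq_add_one (hab : G.Adj a b) :
    x ∈ GHalfspace G a b ↔ G.dist x b = G.dist x a + 1 := by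
  have hdiff := hab.diff_dist_adj (u := x)
  rw [GHalfspace, Set.mem_ofPred_eq]
  lia

lemma dist_ne_dist_of_isBipartite_of_adj (hconn : G.Connected) (hbip : G.IsBipartite)
    (hab : G.Adj a b) (x : V) : G.dist x a ≠ G.dist x b := by
  obtain ⟨p, hp⟩ := hconn.exists_walk_length_eq_dist x a
  obtain ⟨q, hq⟩ := hconn.exists_walk_length_eq_dist x b
  let c : G.Coloring Bool := hbip.toColoring (by simp)
  have hpar : Even (G.dist x a) ↔ (c x ↔ c a) := hp ▸ c.even_length_iff_congr p
  have hpar' : Even (G.dist x b) ↔ (c x ↔ c b) := hq ▸ c.even_length_iff_congr q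
  intro heq
  have hc : c a ≠ c b := c.valid hab
  rw [heq] at hpar
  grind

lemma notMem_gHalfspace_iff (hconn : G.Connected) (hbip : G.IsBipartite) (hab : G.Adj a b) :
    x ∉ GHalfspace G a b ↔ x ∈ GHalfspace G b a :=
  not_lt.trans (dist_ne_dist_of_isBipartite_of_adj hconn hbip hab x).symm.le_iff_lt

lemma GConvex.subset_gHalfspace (hconn : G.Connected) (hbip : G.IsBipartite) (hA : GConvex G A)
    (hw : w ∈ A) (hu : u ∉ A) (hwu : G.Adj w u) : A ⊆ GHalfspace G w u := by
  intro a ha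
  by_contra hau
  rw [notMem_gHalfspace_iff hconn hbip hwu, mem_gHalfspace_iff_dist_eq_add_one hwu.symm] at hau
  exact hu (hA a ha w hw u (by rw [hau, SimpleGraph.dist_eq_one_iff_adj.2 hwu.symm]))

lemma dist_add_dist_eq_of_mem_gHalfspace (hwu : G.Adj w u) (hxy : G.Adj x y)
    (hw : w ∈ GHalfspace G x y) (hx : x ∈ GHalfspace G w u) (hu : u ∈ GHalfspace G y x) :
    G.dist w u + G.dist u y = G.dist w y := by
  rw [mem_gHalfspace_iff_dist_eq_add_one hxy] at hw
  rw [mem_gHalfspace_iff_dist_eq_add_one hwu, G.dist_comm, G.dist_comm (u := x)] at hx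
  rw [mem_gHalfspace_iff_dist_eq_add_one hxy.symm] at hu
  have hone : G.dist w u = 1 := SimpleGraph.dist_eq_one_iff_adj.2 hwu
  lia

end Halfspace

section PartialCube

variable {V : Type*} {G : SimpleGraph V} {a b : V}

lemma gConvex_setOf_apply_eq {ι : Type*} [Fintype ι] {β : ι → Type*} [∀ i, DecidableEq (β i)]
    {φ : V → ∀ i, β i} (hφ : ∀ u v, G.dist u v = hammingDist (φ u) (φ v)) (i : ι) (c : β i) :
    GConvex G {x | φ x i = c} := by
  intro u hu w hw x hx
  simp only [hφ] at hx
  exact (apply_eq_of_hammingDist_add_eq hx (hu.trans hw.symm)).trans hu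

lemma exists_gHalfspace_eq_setOf_apply_eq {ι : Type*} [Fintype ι] {φ : V → ι → Bool}
    (hφ : ∀ u v, G.dist u v = hammingDist (φ u) (φ v)) (hab : G.Adj a b) :
    ∃ i, GHalfspace G a b = {x | φ x i = φ a i} := by
  have hone : hammingDist (φ a) (φ b) = 1 := by
    rw [← hφ, SimpleGraph.dist_eq_one_iff_adj.2 hab]
  obtain ⟨i, hi⟩ := exists_forall_hammingDist_eq_add_one_or hone
  refine ⟨i, Set.ext fun x => ?_⟩
  rw [GHalfspace, Set.mem_ofPred_eq, Set.mem_ofPred_eq, hφ, hφ]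
  grind

lemma IsPartialCube.gConvex_gHalfspace (hpc : IsPartialCube G) (hab : G.Adj a b) :
    GConvex G (GHalfspace G a b) := by
  obtain ⟨d, φ, hφ⟩ := hpc
  obtain ⟨i, hi⟩ := exists_gHalfspace_eq_setOf_apply_eq hφ hab
  exact hi ▸ gConvex_setOf_apply_eq hφ i _

lemma IsPartialCube.isBipartite (hpc : IsPartialCube G) : G.IsBipartite := by
  obtain ⟨d, φ, hφ⟩ := hpc
  let weight (x : V) : ℕ := hammingDist (fun _ => false) (φ x)
  have hweight {x y : V} (hxy : G.Adj x y) : Even (weight x) ↔ ¬ Even (weight y) := by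
    have hone : hammingDist (φ x) (φ y) = 1 := by
      rw [← hφ, SimpleGraph.dist_eq_one_iff_adj.2 hxy]
    obtain ⟨i, hi⟩ := exists_forall_hammingDist_eq_add_one_or hone
    have hdiff : weight y = weight x + 1 ∨ weight x = weight y + 1 :=
      (hi fun _ => false).imp And.right And.right
    grind
  let parity : G.Coloring Bool :=
    SimpleGraph.Coloring.mk (fun x => decide (Even (weight x))) fun hxy => by
      rw [ne_eq, decide_eq_decide, hweight hxy]
      exact not_iff_self
  simpa using parity.colorable

end PartialCube

section Cover

variable {V : Type*} {G : SimpleGraph V} {v u w : V} {A B T : Set V}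

lemma GConvex.mem_of_ssubset_of_subset_gConvexHull (hconn : G.Connected) (hbip : G.IsBipartite)
    (hhalf : ∀ a b, G.Adj a b → GConvex G (GHalfspace G a b)) (hA : GConvex G A)
    (hT : GConvex G T) (hw : w ∈ A) (hu : u ∉ A) (hwu : G.Adj w u) (hAT : A ⊂ T)
    (hThull : T ⊆ GConvexHull G (A ∪ {u})) : u ∈ T := by
  obtain ⟨t, htT, htA⟩ := Set.exists_of_ssubset hAT
  obtain ⟨x, hx, y, ⟨hyT, hyA⟩, hxy⟩ :=
    hT.exists_adj_of_mem_of_notMem hconn hw (hAT.1 hw) htT htA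
  have hAwu : A ⊆ GHalfspace G w u := hA.subset_gHalfspace hconn hbip hw hu hwu
  have hAxy : A ⊆ GHalfspace G x y := hA.subset_gHalfspace hconn hbip hx hyA hxy
  have hy : y ∉ GHalfspace G x y := by simp [GHalfspace]
  have huxy : u ∉ GHalfspace G x y := fun hmem =>
    hy ((gConvexHull_union_singleton_subset_iff (hhalf x y hxy)).2 ⟨hAxy, hmem⟩ (hThull hyT))
  rw [notMem_gHalfspace_iff hconn hbip hxy] at huxy
  exact hT w (hAT.1 hw) y hyT u
    (dist_add_dist_eq_of_mem_gHalfspace hwu hxy (hAxy hw) (hAwu hx) huxy)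

lemma coversIn_gConvexHull_union_singleton (hconn : G.Connected) (hbip : G.IsBipartite)
    (hhalf : ∀ a b, G.Adj a b → GConvex G (GHalfspace G a b)) (v : V) (hA : GConvex G A)
    (hw : w ∈ A) (hu : u ∉ A) (hwu : G.Adj w u) :
    CoversIn G v A (GConvexHull G (A ∪ {u})) := by
  obtain ⟨hAhull, huhull⟩ :=
    (gConvexHull_union_singleton_subset_iff (gConvex_gConvexHull G (A ∪ {u}))).1 subset_rfl
  refine ⟨⟨hAhull, fun hsub => hu (hsub huhull)⟩, fun T hT hAT hTB => hTB.2 ?_⟩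
  exact (gConvexHull_union_singleton_subset_iff hT.1).2
    ⟨hAT.1, hA.mem_of_ssubset_of_subset_gConvexHull hconn hbip hhalf hT.1 hw hu hwu hAT hTB.1⟩

lemma CoversIn.eq_gConvexHull_union_singleton (hcov : CoversIn G v A B) (hv : v ∈ A)
    (hB : GConvex G B) (hu : u ∈ B \ A) : B = GConvexHull G (A ∪ {u}) := by
  obtain ⟨hAhull, huhull⟩ :=
    (gConvexHull_union_singleton_subset_iff (gConvex_gConvexHull G (A ∪ {u}))).1 subset_rfl
  have hhullB : GConvexHull G (A ∪ {u}) ⊆ B :=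
    (gConvexHull_union_singleton_subset_iff hB).2 ⟨hcov.1.1, hu.1⟩
  by_contra hne
  exact hcov.2 _ ⟨gConvex_gConvexHull G _, hAhull hv⟩ ⟨hAhull, fun hsub => hu.2 (hsub huhull)⟩
    (hhullB.ssubset_of_ne (Ne.symm hne))

-- By Djoković's theorem the connected bipartite graphs with convex halfspaces are exactly the
-- partial cubes of arbitrary, possibly infinite, dimension.
theorem coversIn_iff_convexHull_insert_general (hconn : G.Connected) (hbip : G.IsBipartite)
    (hhalf : ∀ a b, G.Adj a b → GConvex G (GHalfspace G a b))
    (hA : ConvCont G v A) (hB : ConvCont G v B) :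
    CoversIn G v A B ↔
      ∃ u ∈ B \ A, B = GConvexHull G (A ∪ {u}) ∧ ∃ w ∈ A, G.Adj u w := by
  constructor
  · intro hcov
    obtain ⟨t, htB, htA⟩ := Set.exists_of_ssubset hcov.1
    obtain ⟨w, hw, u, hu, hwu⟩ := hB.1.exists_adj_of_mem_of_notMem hconn hA.2 hB.2 htB htA
    exact ⟨u, hu, hcov.eq_gConvexHull_union_singleton hA.2 hB.1 hu, w, hw, hwu.symm⟩
  · rintro ⟨u, hu, hBhull, w, hw, huw⟩
    rw [hBhull]
    exact coversIn_gConvexHull_union_singleton hconn hbip hhalf v hA.1 hw hu.2 huw.symm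

end Cover

/-- In a finite partial cube `G`, for convex sets `A ⊆ B` containing `v`, `B` covers `A`
in `𝓛_G^v` iff `B` is the convex hull of `A` together with a single vertex `u ∈ B \ A`
adjacent to some vertex of `A`. -/
theorem coversIn_iff_convexHull_insert {V : Type*} [Fintype V] (G : SimpleGraph V)
    (hconn : G.Connected) (hpc : IsPartialCube G) (v : V) (A B : Set V)
    (hA : ConvCont G v A) (hB : ConvCont G v B) :
    CoversIn G v A B ↔
      ∃ u ∈ B \ A, B = GConvexHull G (A ∪ {u}) ∧ ∃ w ∈ A, G.Adj u w :=
  coversIn_iff_convexHull_insert_general hconn hpc.isBipartite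
    (fun _ _ => hpc.gConvex_gHalfspace) hA hB
end
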